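/- In the nonlinear ICA setting (empty graph, unintervened joint p^0(z) = ∏_{i=1}^d p_i(z_i) with p_i strictly positive C¹ densities on ℝ), let T be a finite collection of strict subsets of [d] with ⋃_{τ∈T} τ = [d] and n_τ := |τ|, and for each τ ∈ T let there be n_τ perfect fat-hand interventional regimes with target τ whose intervened block densities factorize into strictly positive C¹ marginals q^s_{τ,j} (s ∈ [n_τ], j ∈ [n_τ]); write q^0_{τ,j} for the corresponding unintervened marginals. Assume, for each of two such models, that for Lebesgue-a.e. z_τ ∈ ℝ^{n_τ} the vectors v_τ(z_τ, s) − v_τ(z_τ, 0), s = 1,…,n_τ, are linearly independent in ℝ^{n_τ}, where v_τ(z_τ, s) := ((log q^s_{τ,1})′(z_{τ,1}),…,(log q^s_{τ,n_τ})′(z_{τ,n_τ})). If f, f′ : ℝ^d → ℝ^d are C¹ diffeomorphisms such that the pushforward of the first model's measure under f equals the pushforward of the second model's measure under f′ in every regime (unintervened and all interventional), then φ := f′⁻¹∘f is block-identifiable: for every τ ∈ T the components (φ_i)_{i∈τ} depend only on z_τ and the induced map φ_τ : ℝ^{n_τ} → ℝ^{n_τ} is a diffeomorphism. -/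

import Mathlib

open MeasureTheory

noncomputable section

/-- `f` depends only on the coordinates in `S`. -/
def DependsOnlyOn {d : ℕ} {α : Type*} (f : (Fin d → ℝ) → α) (S : Finset (Fin d)) : Prop :=
  ∀ z w : Fin d → ℝ, (∀ i ∈ S, z i = w i) → f z = f w

/-- `f` is a C¹ diffeomorphism between (real) normed spaces. -/
def IsC1Diffeo {E F : Type*} [NormedAddCommGroup E] [NormedSpace ℝ E]
    [NormedAddCommGroup F] [NormedSpace ℝ F] (f : E → F) : Prop :=
  ContDiff ℝ 1 f ∧ ∃ g : F → E, ContDiff ℝ 1 g ∧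
    Function.LeftInverse g f ∧ Function.RightInverse g f

/-- The measure on `ℝ^d` with density `ρ` with respect to Lebesgue measure. -/
def densityMeasure {d : ℕ} (ρ : (Fin d → ℝ) → ℝ) : Measure (Fin d → ℝ) :=
  volume.withDensity fun z => ENNReal.ofReal (ρ z)

/-- The measure on `ℝ` with density `r` with respect to Lebesgue measure. -/
def densityMeasure₁ (r : ℝ → ℝ) : Measure ℝ :=
  volume.withDensity fun x => ENNReal.ofReal (r x)

/-- Membership in `S_scaling`: the map acts by an elementwise C¹ diffeomorphism of `ℝ`
on each coordinate. -/
def InSScaling {d : ℕ} (h : (Fin d → ℝ) → (Fin d → ℝ)) : Prop :=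
  ∃ hs : Fin d → ℝ → ℝ, (∀ i, IsC1Diffeo (hs i)) ∧ ∀ (z : Fin d → ℝ) (i : Fin d), h z i = hs i (z i)

/-- Membership in `S_reparam`: a coordinate permutation composed with an element of
`S_scaling`. -/
def InSReparam {d : ℕ} (g : (Fin d → ℝ) → (Fin d → ℝ)) : Prop :=
  ∃ (σ : Equiv.Perm (Fin d)) (hs : Fin d → ℝ → ℝ),
    (∀ i, IsC1Diffeo (hs i)) ∧ ∀ (z : Fin d → ℝ) (i : Fin d), g z i = hs (σ i) (z (σ i))

/-- A C¹ conditional-density family for the DAG on `Fin d` with parent map `pa`: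
each `p i` is strictly positive, C¹, depends only on the coordinates `{i} ∪ pa i`,
and integrates to `1` in the `i`-th coordinate. -/
def IsCondFamily {d : ℕ} (pa : Fin d → Finset (Fin d))
    (p : Fin d → (Fin d → ℝ) → ℝ) : Prop :=
  ∀ i, (∀ z, 0 < p i z) ∧ ContDiff ℝ 1 (p i) ∧
    DependsOnlyOn (p i) (insert i (pa i)) ∧
    ∀ z, (∫ t : ℝ, p i (Function.update z i t)) = 1

/-- A strictly positive C¹ probability density on `ℝ`. -/
def IsC1Density (r : ℝ → ℝ) : Prop :=
  (∀ x, 0 < r x) ∧ ContDiff ℝ 1 r ∧ (∫ x : ℝ, r x) = 1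

/-- The joint density `z ↦ ∏ i, p i z` of a conditional-density family. -/
def jointDensity {d : ℕ} (p : Fin d → (Fin d → ℝ) → ℝ) : (Fin d → ℝ) → ℝ :=
  fun z => ∏ i, p i z

/-- `j` is an ancestor of `i` in the DAG with parent map `pa` (transitive closure of the
parent relation). -/
def IsAnc {d : ℕ} (pa : Fin d → Finset (Fin d)) (j i : Fin d) : Prop :=
  Relation.TransGen (fun a b => a ∈ pa b) j i

/-- The observational joint mechanism of the block `τ`: the product of the causal mechanisms
of the nodes in `τ`. -/
def blockMech {d : ℕ} (p : Fin d → (Fin d → ℝ) → ℝ) (τ : Finset (Fin d)) :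
    (Fin d → ℝ) → ℝ := fun z => ∏ i ∈ τ, p i z

/-- The `j`-th element of the block `τ` (under the canonical enumeration of `τ`). -/
def coordOf {d : ℕ} (τ : Finset (Fin d)) (j : Fin τ.card) : Fin d :=
  ((τ.equivFin.symm j : τ) : Fin d)

/-- A strictly positive C¹ joint intervened density over the block `τ` (no conditioning on
other variables): it depends only on the coordinates in `τ` and integrates to 1 over the
block. -/
def IsBlockDensity {d : ℕ} (τ : Finset (Fin d)) (r : (Fin d → ℝ) → ℝ) : Prop :=
  (∀ z, 0 < r z) ∧ ContDiff ℝ 1 r ∧ DependsOnlyOn r τ ∧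
    ∀ z : Fin d → ℝ,
      (∫ y : {x // x ∈ τ} → ℝ, r (fun j => if h : j ∈ τ then y ⟨j, h⟩ else z j)) = 1

/-- Embed a configuration of the block `τ` into `ℝ^d`, filling the other coordinates
with `0`. -/
def fillBlock {d : ℕ} (τ : Finset (Fin d)) (y : {x // x ∈ τ} → ℝ) : Fin d → ℝ :=
  fun j => if h : j ∈ τ then y ⟨j, h⟩ else 0

/-- The map `ℝ^τ → ℝ^τ` induced by the components of `φ` indexed by `τ` (well defined when
those components depend only on the coordinates in `τ`). -/
def blockMap {d : ℕ} (φ : (Fin d → ℝ) → (Fin d → ℝ)) (τ : Finset (Fin d)) :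
    ({x // x ∈ τ} → ℝ) → ({x // x ∈ τ} → ℝ) :=
  fun y i => φ (fillBlock τ y) (i : Fin d)

/-!
Write `φ = f'⁻¹ ∘ f`. Dividing the change-of-variables identity of an interventional regime by that
of the unintervened one cancels the Jacobian of `φ`, and what remains says that the log-likelihood
ratio of the regime at `z`, a function of `z_τ` only, equals that of the second model at `φ z`, a
function of `(φ z)_τ` only. Differentiating in a direction that leaves `z_τ` fixed gives one linear
equation for the derivative of `(φ z)_τ` per regime; on a dense set of `z` these equations have only
the zero solution, so by continuity that derivative vanishes everywhere. Then `Dφ` preserves the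
subspace `{v | v_τ = 0}`, and being invertible it maps this finite-dimensional space onto itself, so
`Dφ⁻¹` preserves it as well. Hence `(φ⁻¹)_τ` depends on the `τ`-coordinates only, and it provides
the inverse of the block map.
-/

/-! ### Transport of densities -/

section Density

open scoped ENNReal

variable {X Y : Type*} [MeasurableSpace X] [MeasurableSpace Y]

theorem map_withDensity_comp {μ : Measure X} {e : X → Y} (he : Measurable e) {b : Y → ℝ≥0∞}
    (hb : Measurable b) :
    (μ.withDensity (b ∘ e)).map e = (μ.map e).withDensity b := by
  ext S hS
  rw [Measure.map_apply he hS, withDensity_apply _ (he hS), withDensity_apply _ hS,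
    setLIntegral_map hS hb he]
  rfl

theorem mul_ae_eq_mul_of_withDensity_eq {μ ν : Measure X} [SigmaFinite ν] {a₀ a₁ b₀ b₁ : X → ℝ≥0∞}
    (ha₀ : Measurable a₀) (ha₁ : Measurable a₁) (hb₀ : Measurable b₀) (hb₁ : Measurable b₁)
    (h₀ : μ.withDensity a₀ = ν.withDensity b₀) (h₁ : μ.withDensity a₁ = ν.withDensity b₁) :
    b₀ * a₁ =ᵐ[ν] b₁ * a₀ := by
  rw [← withDensity_eq_iff_of_sigmaFinite (hb₀.mul ha₁).aemeasurable (hb₁.mul ha₀).aemeasurable]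
  calc ν.withDensity (b₀ * a₁)
    _ = μ.withDensity (a₀ * a₁) := by
      rw [withDensity_mul _ hb₀ ha₁, ← h₀, withDensity_mul _ ha₀ ha₁]
    _ = μ.withDensity (a₁ * a₀) := by rw [mul_comm]
    _ = ν.withDensity (b₁ * a₀) := by
      rw [withDensity_mul _ hb₁ ha₀, ← h₁, withDensity_mul _ ha₁ ha₀]

theorem comp_eq_of_map_withDensity_exp_mul_eq [TopologicalSpace X] [BorelSpace X]
    [TopologicalSpace Y] [BorelSpace Y] {μ : Measure X} {ν : Measure Y} [SigmaFinite ν]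
    [ν.IsOpenPosMeasure] (e : X ≃ₜ Y) {P L : X → ℝ} {Q M : Y → ℝ}
    (hP : Measurable P) (hP_pos : ∀ x, 0 < P x) (hL : Continuous L)
    (hQ : Measurable Q) (hQ_pos : ∀ y, 0 < Q y) (hM : Continuous M)
    (h₀ : (μ.withDensity fun x => ENNReal.ofReal (P x)).map e =
      ν.withDensity fun y => ENNReal.ofReal (Q y))
    (h₁ : (μ.withDensity fun x => ENNReal.ofReal (Real.exp (L x) * P x)).map e =
      ν.withDensity fun y => ENNReal.ofReal (Real.exp (M y) * Q y)) :
    M ∘ e = L := by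
  have pushforward {A : X → ℝ} (hA : Measurable A) :
      (μ.withDensity fun x => ENNReal.ofReal (A x)).map e =
        (μ.map e).withDensity fun y => ENNReal.ofReal (A (e.symm y)) := by
    have hAe : Measurable fun y => ENNReal.ofReal (A (e.symm y)) :=
      (hA.comp e.symm.continuous.measurable).ennreal_ofReal
    simpa [Function.comp_def] using map_withDensity_comp (μ := μ) e.continuous.measurable hAe
  have hLP : Measurable fun x => Real.exp (L x) * P x := hL.measurable.exp.mul hP
  have hMQ : Measurable fun y => Real.exp (M y) * Q y := hM.measurable.exp.mul hQ
  have he_symm : Measurable e.symm := e.symm.continuous.measurable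
  rw [pushforward hP] at h₀
  rw [pushforward hLP] at h₁
  have hae : M =ᵐ[ν] L ∘ e.symm := by
    filter_upwards [mul_ae_eq_mul_of_withDensity_eq (hP.comp he_symm).ennreal_ofReal
      (hLP.comp he_symm).ennreal_ofReal hQ.ennreal_ofReal hMQ.ennreal_ofReal h₀ h₁] with y hy
    have hPy := hP_pos (e.symm y)
    have hQy := hQ_pos y
    simp only [Pi.mul_apply, Function.comp_apply] at hy
    rw [← ENNReal.ofReal_mul (by positivity), ← ENNReal.ofReal_mul (by positivity),
      ENNReal.ofReal_eq_ofReal_iff (by positivity) (by positivity)] at hy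
    refine Real.exp_injective (mul_right_cancel₀ (mul_pos hPy hQy).ne' ?_)
    rw [Function.comp_apply]
    linear_combination -hy
  rw [Measure.eq_of_ae_eq hae hM (hL.comp e.symm.continuous)]
  ext x
  simp

theorem map_comp_eq_of_map_eq_map {Z : Type*} [MeasurableSpace Z] {μ : Measure X} {ν : Measure Z}
    {f : X → Y} {f' : Z → Y} {g' : Y → Z} (hf : Measurable f) (hf' : Measurable f')
    (hg' : Measurable g') (hinv : Function.LeftInverse g' f') (h : μ.map f = ν.map f') :
    μ.map (g' ∘ f) = ν := by
  rw [← Measure.map_map hg' hf, h, Measure.map_map hg' hf', hinv.comp_eq_id, Measure.map_id]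

end Density

/-! ### Maps factoring through a linear projection -/

section FactorsThrough

variable {E F G H : Type*} [NormedAddCommGroup E] [NormedSpace ℝ E] [AddCommGroup F] [Module ℝ F]
  [NormedAddCommGroup G] [NormedSpace ℝ G] [NormedAddCommGroup H] [NormedSpace ℝ H]

theorem factorsThrough_iff_ker_le_ker_fderiv {f : E → G} (hf : Differentiable ℝ f)
    (π : E →ₗ[ℝ] F) :
    f.FactorsThrough π ↔ ∀ x, π.ker ≤ (fderiv ℝ f x).ker := by
  have hline (x v : E) (t : ℝ) :
      HasDerivAt (fun t : ℝ => f (x + t • v)) (fderiv ℝ f (x + t • v) v) t := by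
    have hl : HasDerivAt (fun t : ℝ => x + t • v) v t := by
      simpa using ((hasDerivAt_id t).smul_const v).const_add x
    exact (hf _).hasFDerivAt.comp_hasDerivAt t hl
  constructor
  · intro hfac x v hv
    have hconst : (fun t : ℝ => f (x + t • v)) = fun _ => f x :=
      funext fun t => hfac (by simp [LinearMap.mem_ker.1 hv])
    have hderiv := hline x v 0
    rw [hconst, zero_smul, add_zero] at hderiv
    exact hderiv.unique (hasDerivAt_const 0 (f x))
  · intro hker x y hxy
    have hv : y - x ∈ π.ker := by simp [hxy]
    have hderiv (t : ℝ) : HasDerivAt (fun t : ℝ => f (x + t • (y - x))) 0 t :=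
      (hker (x + t • (y - x)) hv : fderiv ℝ f (x + t • (y - x)) (y - x) = 0) ▸ hline x (y - x) t
    simpa using is_const_of_deriv_eq_zero (fun t => (hderiv t).differentiableAt)
      (fun t => (hderiv t).deriv) 0 1

theorem factorsThrough_of_comp_factorsThrough {κ : Type*} {χ : E → G} (hχ : ContDiff ℝ 1 χ)
    {B : κ → G → H} (hB : ∀ s, Differentiable ℝ (B s))
    (hdense : Dense {x | ⨅ s, (fderiv ℝ (B s) (χ x)).ker = ⊥})
    {π : E →ₗ[ℝ] F} (hfac : ∀ s, (B s ∘ χ).FactorsThrough π) :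
    χ.FactorsThrough π := by
  have hχd : Differentiable ℝ χ := hχ.differentiable one_ne_zero
  rw [factorsThrough_iff_ker_le_ker_fderiv hχd]
  intro x v hv
  have hcont : Continuous fun x => fderiv ℝ χ x v :=
    (hχ.continuous_fderiv one_ne_zero).clm_apply continuous_const
  refine congrFun (hcont.ext_on hdense continuous_const fun x hx => ?_) x
  suffices fderiv ℝ χ x v ∈ ⨅ s, (fderiv ℝ (B s) (χ x)).ker by simpa [hx.out] using this
  rw [Submodule.mem_iInf]
  intro s
  have hchain := (factorsThrough_iff_ker_le_ker_fderiv ((hB s).comp hχd) π).1 (hfac s) x hv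
  rwa [LinearMap.mem_ker, fderiv_comp x (hB s _) (hχd x)] at hchain

theorem factorsThrough_comp_of_inverse {π : E →L[ℝ] G} [FiniteDimensional ℝ π.ker] {φ ψ : E → E}
    (hφ : Differentiable ℝ φ) (hψ : Differentiable ℝ ψ) (hψφ : Function.LeftInverse ψ φ)
    (hφψ : Function.RightInverse ψ φ) (hfac : (π ∘ φ).FactorsThrough π) :
    (π ∘ ψ).FactorsThrough π := by
  have fderiv_proj_comp {χ : E → E} (hχ : Differentiable ℝ χ) (x : E) :
      fderiv ℝ (π ∘ χ) x = π ∘L fderiv ℝ χ x :=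
    (π.hasFDerivAt.comp x (hχ x).hasFDerivAt).fderiv
  refine (factorsThrough_iff_ker_le_ker_fderiv (π.differentiable.comp hψ) π.toLinearMap).2 ?_
  intro y v hv
  have hpres : ∀ w ∈ π.ker, fderiv ℝ φ (ψ y) w ∈ π.ker := fun w hw => by
    have h := (factorsThrough_iff_ker_le_ker_fderiv (π.differentiable.comp hφ) π.toLinearMap).1 hfac
      (ψ y) hw
    rwa [fderiv_proj_comp hφ] at h
  have hleft : Function.LeftInverse (fderiv ℝ ψ y) (fderiv ℝ φ (ψ y)) := fun w => by
    have h := (hψ (φ (ψ y))).hasFDerivAt.comp (ψ y) (hφ (ψ y)).hasFDerivAt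
    rw [hψφ.comp_eq_id, hφψ] at h
    exact congrArg (· w) (h.unique (hasFDerivAt_id (ψ y)))
  obtain ⟨w, hw, rfl⟩ := (LinearMap.injOn_iff_surjOn hpres).1 hleft.injective.injOn hv
  rw [LinearMap.mem_ker, fderiv_proj_comp hψ]
  simpa [hleft w] using hw

end FactorsThrough

namespace IsC1Diffeo

variable {E F G : Type*} [NormedAddCommGroup E] [NormedSpace ℝ E] [NormedAddCommGroup F]
  [NormedSpace ℝ F] [NormedAddCommGroup G] [NormedSpace ℝ G]

theorem comp {g : F → G} {f : E → F} (hg : IsC1Diffeo g) (hf : IsC1Diffeo f) :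
    IsC1Diffeo (g ∘ f) := by
  obtain ⟨hg, g', hg', hg'g, hgg'⟩ := hg
  obtain ⟨hf, f', hf', hf'f, hff'⟩ := hf
  exact ⟨hg.comp hf, f' ∘ g', hf'.comp hg', hg'g.comp hf'f, hgg'.comp hff'⟩

theorem exists_homeomorph {f : E → F} (hf : IsC1Diffeo f) : ∃ e : E ≃ₜ F, ⇑e = f := by
  obtain ⟨hf, g, hg, hgf, hfg⟩ := hf
  exact ⟨⟨⟨f, g, hgf, hfg⟩, hf.continuous, hg.continuous⟩, rfl⟩

end IsC1Diffeo

/-! ### Coordinate blocks -/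

section Block

variable {d : ℕ} (τ : Finset (Fin d))

/-- The projection `z ↦ z_τ` onto the coordinates in the block `τ`. -/
abbrev blockProj : (Fin d → ℝ) →L[ℝ] ({x // x ∈ τ} → ℝ) :=
  Pi.compRightL ℝ (fun _ => ℝ) Subtype.val

variable {τ}

theorem blockProj_fillBlock (y : {x // x ∈ τ} → ℝ) : blockProj τ (fillBlock τ y) = y := by
  ext i
  simp [fillBlock]

theorem isOpenMap_blockProj : IsOpenMap (blockProj τ) :=
  (blockProj τ).isOpenMap fun y => ⟨fillBlock τ y, blockProj_fillBlock y⟩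

theorem contDiff_fillBlock {n : WithTop ℕ∞} : ContDiff ℝ n (fillBlock τ) := by
  refine contDiff_pi.2 fun j => ?_
  by_cases h : j ∈ τ
  · simpa only [fillBlock, h, dif_pos] using contDiff_apply ℝ ℝ _
  · simpa only [fillBlock, h, dif_neg, not_false_eq_true] using contDiff_const

theorem forall_dependsOnlyOn_iff_factorsThrough {φ : (Fin d → ℝ) → (Fin d → ℝ)} :
    (∀ i ∈ τ, DependsOnlyOn (fun z => φ z i) τ) ↔
      (blockProj τ ∘ φ).FactorsThrough (blockProj τ) := by
  simp only [DependsOnlyOn, Function.FactorsThrough, Function.comp_apply, funext_iff,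
    Subtype.forall, Pi.compRightL_apply]
  exact ⟨fun h z w hzw i hi => h i hi z w hzw, fun h i hi z w hzw => h hzw i hi⟩

theorem contDiff_blockMap {n : WithTop ℕ∞} {φ : (Fin d → ℝ) → (Fin d → ℝ)}
    (hφ : ContDiff ℝ n φ) : ContDiff ℝ n (blockMap φ τ) :=
  (blockProj τ).contDiff.comp (hφ.comp contDiff_fillBlock)

theorem leftInverse_blockMap {φ ψ : (Fin d → ℝ) → (Fin d → ℝ)} (h : Function.LeftInverse ψ φ)
    (hψ : (blockProj τ ∘ ψ).FactorsThrough (blockProj τ)) :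
    Function.LeftInverse (blockMap ψ τ) (blockMap φ τ) := fun y =>
  calc blockProj τ (ψ (fillBlock τ (blockMap φ τ y)))
      = blockProj τ (ψ (φ (fillBlock τ y))) := hψ (blockProj_fillBlock _)
    _ = y := by rw [h, blockProj_fillBlock]

theorem IsC1Diffeo.blockMap {φ : (Fin d → ℝ) → (Fin d → ℝ)} (hφ : IsC1Diffeo φ)
    (hdep : (blockProj τ ∘ φ).FactorsThrough (blockProj τ)) : IsC1Diffeo (blockMap φ τ) := by
  obtain ⟨hφ, ψ, hψ, hψφ, hφψ⟩ := hφ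
  have hdep_inv : (blockProj τ ∘ ψ).FactorsThrough (blockProj τ) :=
    factorsThrough_comp_of_inverse (hφ.differentiable one_ne_zero) (hψ.differentiable one_ne_zero)
      hψφ hφψ hdep
  exact ⟨contDiff_blockMap hφ, _, contDiff_blockMap hψ, leftInverse_blockMap hψφ hdep_inv,
    leftInverse_blockMap hφψ hdep⟩

end Block

/-! ### Likelihood ratios of product densities -/

section LogRatio

variable {d : ℕ} {τ : Finset (Fin d)}

/-- The logarithm of the likelihood ratio of a fat-hand regime to the unintervened one, as a
function of the block variables `z_τ`: the marginals `r i` with `i ∈ τ` are replaced by the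
marginals `w j`, where `j` enumerates `τ` through `coordOf`. -/
def blockLogRatio (τ : Finset (Fin d)) (r : Fin d → ℝ → ℝ) (w : Fin τ.card → ℝ → ℝ)
    (y : {x // x ∈ τ} → ℝ) : ℝ :=
  ∑ j, (Real.log (w j (y (τ.equivFin.symm j))) - Real.log (r (coordOf τ j) (y (τ.equivFin.symm j))))

variable {r : Fin d → ℝ → ℝ} {w : Fin τ.card → ℝ → ℝ}

theorem exp_blockLogRatio_mul_prod (hr : ∀ i x, 0 < r i x) (hw : ∀ j x, 0 < w j x)
    (z : Fin d → ℝ) :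
    Real.exp (blockLogRatio τ r w (blockProj τ z)) * ∏ i, r i (z i) =
      (∏ j, w j (z (coordOf τ j))) * ∏ i ∈ τᶜ, r i (z i) := by
  have hτ : ∏ i ∈ τ, r i (z i) = ∏ j, r (coordOf τ j) (z (coordOf τ j)) := by
    rw [← Finset.prod_coe_sort, ← τ.equivFin.symm.prod_comp]
    rfl
  have hexp : Real.exp (blockLogRatio τ r w (blockProj τ z)) =
      (∏ j, w j (z (coordOf τ j))) / ∏ i ∈ τ, r i (z i) := by
    rw [hτ, ← Finset.prod_div_distrib, blockLogRatio, Real.exp_sum]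
    refine Finset.prod_congr rfl fun j _ => ?_
    rw [Real.exp_sub, Real.exp_log (hw _ _), Real.exp_log (hr _ _)]
    rfl
  have hpos : 0 < ∏ i ∈ τ, r i (z i) := Finset.prod_pos fun i _ => hr i _
  rw [hexp, ← Finset.prod_mul_prod_compl τ, ← mul_assoc, div_mul_cancel₀ _ hpos.ne']

theorem continuous_blockLogRatio (hr : ∀ i, Continuous (r i)) (hr_pos : ∀ i x, 0 < r i x)
    (hw : ∀ j, Continuous (w j)) (hw_pos : ∀ j x, 0 < w j x) :
    Continuous (blockLogRatio τ r w) :=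
  continuous_finsetSum _ fun j _ =>
    (((hw j).log fun x => (hw_pos j x).ne').sub
      ((hr _).log fun x => (hr_pos _ x).ne')).comp (continuous_apply _)

theorem hasFDerivAt_blockLogRatio (hr : ∀ i, Differentiable ℝ (r i)) (hr_pos : ∀ i x, 0 < r i x)
    (hw : ∀ j, Differentiable ℝ (w j)) (hw_pos : ∀ j x, 0 < w j x) (y : {x // x ∈ τ} → ℝ) :
    HasFDerivAt (blockLogRatio τ r w)
      (∑ j, (deriv (fun t => Real.log (w j t)) (y (τ.equivFin.symm j)) -
          deriv (fun t => Real.log (r (coordOf τ j) t)) (y (τ.equivFin.symm j))) •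
        (ContinuousLinearMap.proj (τ.equivFin.symm j) : ({x // x ∈ τ} → ℝ) →L[ℝ] ℝ)) y := by
  refine HasFDerivAt.fun_sum fun j _ => ?_
  have hw_log := ((hw j).log fun x => (hw_pos j x).ne') (y (τ.equivFin.symm j))
  have hr_log := ((hr (coordOf τ j)).log fun x => (hr_pos _ x).ne') (y (τ.equivFin.symm j))
  have hproj := hasFDerivAt_apply (𝕜 := ℝ) (τ.equivFin.symm j) y
  exact HasDerivAt.comp_hasFDerivAt y (hw_log.hasDerivAt.fun_sub hr_log.hasDerivAt) hproj

theorem iInf_ker_fderiv_blockLogRatio_eq_bot {κ : Type*} {u : κ → Fin τ.card → ℝ → ℝ}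
    (hr : ∀ i, Differentiable ℝ (r i)) (hr_pos : ∀ i x, 0 < r i x)
    (hu : ∀ s j, Differentiable ℝ (u s j)) (hu_pos : ∀ s j x, 0 < u s j x) {y : {x // x ∈ τ} → ℝ}
    (hspan : Submodule.span ℝ (Set.range fun (s : κ) (j : Fin τ.card) =>
      deriv (fun t => Real.log (u s j t)) (y (τ.equivFin.symm j)) -
        deriv (fun t => Real.log (r (coordOf τ j) t)) (y (τ.equivFin.symm j))) = ⊤) :
    ⨅ s, (fderiv ℝ (blockLogRatio τ r (u s)) y).ker = ⊥ := by
  refine (Submodule.eq_bot_iff _).2 fun v hv => ?_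
  have hdot : dotProductBilin ℝ ℝ (fun j => v (τ.equivFin.symm j)) = 0 := by
    refine LinearMap.ext_on_range hspan fun s => ?_
    have hvs := (Submodule.mem_iInf _).1 hv s
    rw [LinearMap.mem_ker, (hasFDerivAt_blockLogRatio hr hr_pos (hu s) (hu_pos s) y).fderiv] at hvs
    simpa [dotProduct, mul_comm] using hvs
  have hv_zero := dotProduct_eq_zero _ fun x => congrArg (· x) hdot
  ext i
  simpa using congrFun hv_zero (τ.equivFin i)

theorem blockLogRatio_comp_eq_of_map_densityMeasure_eq (e : (Fin d → ℝ) ≃ₜ (Fin d → ℝ))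
    {r' : Fin d → ℝ → ℝ} {w' : Fin τ.card → ℝ → ℝ}
    (hr : ∀ i, Continuous (r i)) (hr_pos : ∀ i x, 0 < r i x)
    (hw : ∀ j, Continuous (w j)) (hw_pos : ∀ j x, 0 < w j x)
    (hr' : ∀ i, Continuous (r' i)) (hr'_pos : ∀ i x, 0 < r' i x)
    (hw' : ∀ j, Continuous (w' j)) (hw'_pos : ∀ j x, 0 < w' j x)
    (h₀ : (densityMeasure fun z => ∏ i, r i (z i)).map e =
      densityMeasure fun z => ∏ i, r' i (z i))
    (h₁ : (densityMeasure fun z => (∏ j, w j (z (coordOf τ j))) * ∏ i ∈ τᶜ, r i (z i)).map e =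
      densityMeasure fun z => (∏ j, w' j (z (coordOf τ j))) * ∏ i ∈ τᶜ, r' i (z i)) :
    blockLogRatio τ r' w' ∘ blockProj τ ∘ e = blockLogRatio τ r w ∘ blockProj τ := by
  have prod_meas {r : Fin d → ℝ → ℝ} (hr : ∀ i, Continuous (r i)) :
      Measurable fun z : Fin d → ℝ => ∏ i, r i (z i) :=
    Finset.measurable_fun_prod _ fun i _ => (hr i).measurable.comp (measurable_pi_apply i)
  simp only [← exp_blockLogRatio_mul_prod hr_pos hw_pos,
    ← exp_blockLogRatio_mul_prod hr'_pos hw'_pos] at h₁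
  exact comp_eq_of_map_withDensity_exp_mul_eq e
    (prod_meas hr) (fun z => Finset.prod_pos fun i _ => hr_pos i (z i))
    ((continuous_blockLogRatio hr hr_pos hw hw_pos).comp (blockProj τ).continuous)
    (prod_meas hr') (fun z => Finset.prod_pos fun i _ => hr'_pos i (z i))
    ((continuous_blockLogRatio hr' hr'_pos hw' hw'_pos).comp (blockProj τ).continuous) h₀ h₁

end LogRatio

theorem ica_fat_hand_block_identifiability_general {d : ℕ} {Y κ : Type*} [NormedAddCommGroup Y]
    [NormedSpace ℝ Y] [MeasurableSpace Y] [BorelSpace Y]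
    (p q : Fin d → ℝ → ℝ)
    (hp : ∀ i, Continuous (p i)) (hp_pos : ∀ i x, 0 < p i x)
    (hq : ∀ i, Differentiable ℝ (q i)) (hq_pos : ∀ i x, 0 < q i x)
    (τ : Finset (Fin d)) (u u' : κ → Fin τ.card → ℝ → ℝ)
    (hu : ∀ s j, Continuous (u s j)) (hu_pos : ∀ s j x, 0 < u s j x)
    (hu' : ∀ s j, Differentiable ℝ (u' s j)) (hu'_pos : ∀ s j x, 0 < u' s j x)
    (hspan : Dense {y : {x // x ∈ τ} → ℝ |
      Submodule.span ℝ (Set.range fun (s : κ) (j : Fin τ.card) =>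
        deriv (fun t => Real.log (u' s j t)) (y (τ.equivFin.symm j)) -
          deriv (fun t => Real.log (q (coordOf τ j) t)) (y (τ.equivFin.symm j))) = ⊤})
    (f f' : (Fin d → ℝ) → Y) (g' : Y → (Fin d → ℝ))
    (hf : IsC1Diffeo f) (hf' : ContDiff ℝ 1 f') (hg' : ContDiff ℝ 1 g')
    (hinv₁ : Function.LeftInverse g' f') (hinv₂ : Function.RightInverse g' f')
    (hmatch0 : Measure.map f (densityMeasure fun z => ∏ i, p i (z i)) =
      Measure.map f' (densityMeasure fun z => ∏ i, q i (z i)))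
    (hmatch : ∀ s, Measure.map f (densityMeasure fun z =>
        (∏ j, u s j (z (coordOf τ j))) * ∏ i ∈ τᶜ, p i (z i)) =
      Measure.map f' (densityMeasure fun z =>
        (∏ j, u' s j (z (coordOf τ j))) * ∏ i ∈ τᶜ, q i (z i))) :
    (∀ i ∈ τ, DependsOnlyOn (fun z => g' (f z) i) τ) ∧
      IsC1Diffeo (blockMap (fun z => g' (f z)) τ) := by
  have hφ : IsC1Diffeo (g' ∘ f) := IsC1Diffeo.comp ⟨hg', f', hf', hinv₂, hinv₁⟩ hf
  obtain ⟨e, he⟩ := hφ.exists_homeomorph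
  have transport {μ ν : Measure (Fin d → ℝ)} (h : μ.map f = ν.map f') : μ.map e = ν :=
    he ▸ map_comp_eq_of_map_eq_map hf.1.continuous.measurable hf'.continuous.measurable
      hg'.continuous.measurable hinv₁ h
  have hratio (s : κ) : blockLogRatio τ q (u' s) ∘ blockProj τ ∘ e =
      blockLogRatio τ p (u s) ∘ blockProj τ :=
    blockLogRatio_comp_eq_of_map_densityMeasure_eq e hp hp_pos (hu s) (hu_pos s)
      (fun i => (hq i).continuous) hq_pos (fun j => (hu' s j).continuous) (hu'_pos s)
      (transport hmatch0) (transport (hmatch s))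
  have hdense : Dense {z | ⨅ s, (fderiv ℝ (blockLogRatio τ q (u' s))
      ((blockProj τ ∘ e) z)).ker = ⊥} :=
    (hspan.preimage (isOpenMap_blockProj.comp e.isOpenMap)).mono fun z hz =>
      iInf_ker_fderiv_blockLogRatio_eq_bot hq hq_pos hu' hu'_pos hz
  have hfac : (blockProj τ ∘ g' ∘ f).FactorsThrough (blockProj τ) := by
    rw [← he] at hφ ⊢
    exact factorsThrough_of_comp_factorsThrough (π := (blockProj τ).toLinearMap)
      ((blockProj τ).contDiff.comp hφ.1)
      (fun s y => (hasFDerivAt_blockLogRatio hq hq_pos (hu' s) (hu'_pos s) y).differentiableAt)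
      hdense fun s => hratio s ▸ Function.FactorsThrough.rfl.comp_left _
  exact ⟨forall_dependsOnlyOn_iff_factorsThrough.2 hfac, hφ.blockMap hfac⟩

/-- **Corollary (ICA with fat-hand interventions: block identifiability).** The latent graph
is empty; two models with strictly positive C¹ densities `(p i)`, `(q i)`. The target sets
`τ ∈ T` are strict subsets of the variables covering all of them; for each `τ ∈ T` there are
`|τ|` perfect fat-hand interventional regimes whose intervened block densities factorize into
strictly positive C¹ marginals `u τ s j` (resp. `u' τ s j`). Assume in both models that,
almost everywhere, the vectors `v(z_τ, s) − v(z_τ, 0)` of marginal log-density derivatives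
are linearly independent. If `f`, `f′` are C¹ diffeomorphisms with matching pushforwards in
the unintervened regime and in every interventional regime, then `φ := f′⁻¹ ∘ f` is
block-identifiable: for each `τ ∈ T` the components of `φ` indexed by `τ` depend only on
`z_τ`, and the induced block map is a diffeomorphism. -/
theorem ica_fat_hand_block_identifiability {d : ℕ}
    (p q : Fin d → ℝ → ℝ)
    (hp : ∀ i, IsC1Density (p i)) (hq : ∀ i, IsC1Density (q i))
    (T : Finset (Finset (Fin d)))
    (hcover : ∀ i : Fin d, ∃ τ ∈ T, i ∈ τ)
    (hstrict : ∀ τ ∈ T, τ ≠ Finset.univ)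
    (u u' : (τ : Finset (Fin d)) → Fin τ.card → Fin τ.card → ℝ → ℝ)
    (hu : ∀ τ ∈ T, ∀ (s j : Fin τ.card), IsC1Density (u τ s j))
    (hu' : ∀ τ ∈ T, ∀ (s j : Fin τ.card), IsC1Density (u' τ s j))
    (hdiscp : ∀ τ ∈ T, ∀ᵐ (y : {x // x ∈ τ} → ℝ) ∂volume,
        LinearIndependent ℝ (fun s : Fin τ.card => fun j : Fin τ.card =>
          deriv (fun t => Real.log (u τ s j t)) (y (τ.equivFin.symm j)) -
            deriv (fun t => Real.log (p (coordOf τ j) t)) (y (τ.equivFin.symm j))))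
    (hdiscq : ∀ τ ∈ T, ∀ᵐ (y : {x // x ∈ τ} → ℝ) ∂volume,
        LinearIndependent ℝ (fun s : Fin τ.card => fun j : Fin τ.card =>
          deriv (fun t => Real.log (u' τ s j t)) (y (τ.equivFin.symm j)) -
            deriv (fun t => Real.log (q (coordOf τ j) t)) (y (τ.equivFin.symm j))))
    (f f' g' : (Fin d → ℝ) → (Fin d → ℝ))
    (hf : IsC1Diffeo f) (hf' : ContDiff ℝ 1 f') (hg' : ContDiff ℝ 1 g')
    (hinv₁ : Function.LeftInverse g' f') (hinv₂ : Function.RightInverse g' f')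
    (hmatch0 : Measure.map f (densityMeasure fun z => ∏ i, p i (z i)) =
        Measure.map f' (densityMeasure fun z => ∏ i, q i (z i)))
    (hmatch : ∀ τ ∈ T, ∀ s : Fin τ.card,
        Measure.map f (densityMeasure fun z =>
            (∏ j : Fin τ.card, u τ s j (z (coordOf τ j))) * ∏ i ∈ τᶜ, p i (z i)) =
        Measure.map f' (densityMeasure fun z =>
            (∏ j : Fin τ.card, u' τ s j (z (coordOf τ j))) * ∏ i ∈ τᶜ, q i (z i))) :
    ∀ τ ∈ T,
      (∀ i ∈ τ, DependsOnlyOn (fun z => g' (f z) i) τ) ∧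
      IsC1Diffeo (blockMap (fun z => g' (f z)) τ) :=
  fun τ hτ => ica_fat_hand_block_identifiability_general p q
    (fun i => (hp i).2.1.continuous) (fun i => (hp i).1)
    (fun i => (hq i).2.1.differentiable one_ne_zero) (fun i => (hq i).1) τ (u τ) (u' τ)
    (fun s j => (hu τ hτ s j).2.1.continuous) (fun s j => (hu τ hτ s j).1)
    (fun s j => (hu' τ hτ s j).2.1.differentiable one_ne_zero) (fun s j => (hu' τ hτ s j).1)
    (Measure.dense_of_ae ((hdiscq τ hτ).mono fun _ hy =>
      hy.span_eq_top_of_card_eq_finrank' (by simp)))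
    f f' g' hf hf' hg' hinv₁ hinv₂ hmatch0 (hmatch τ hτ)
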